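/- For every n ≥ 1, (n−1)^(n−1) = Σ over compositions I = (i₁,…,i_r) of n of [ (−1)^(r−1) · n!/(i₁!⋯i_r!) · ∏_{k=1}^{r} (i_k + 1)^(i_k − 1) ], where the left-hand side uses the convention 0^0 = 1 (the identity is an equality of integers). -/

import Mathlib

open Polynomial in
/-- The case `x = 1` of Abel's binomial identity
`∑ k, n.choose k * x * (x + k) ^ (k - 1) * (y + n - k) ^ (n - k) = (x + y + n) ^ n`. -/
lemma abel_binomial_one (n : ℕ) :
    ∑ k ∈ Finset.range (n + 1),
      C ((n.choose k : ℚ) * (k + 1) ^ (k - 1)) * (X + C ((n - k : ℕ) : ℚ)) ^ (n - k) =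
      (X + C ((n + 1 : ℕ) : ℚ)) ^ n := by
  induction n with
  | zero => simp
  | succ n ih =>
    rw [← sub_eq_zero]
    set p : ℚ[X] := ∑ k ∈ Finset.range (n + 1 + 1),
      C (((n + 1).choose k : ℚ) * (k + 1) ^ (k - 1)) *
        (X + C ((n + 1 - k : ℕ) : ℚ)) ^ (n + 1 - k) - (X + C ((n + 1 + 1 : ℕ) : ℚ)) ^ (n + 1)
      with hp
    have hderiv : derivative p = 0 := by
      have hcomp := congrArg (fun q : ℚ[X] => C ((n : ℚ) + 1) * q.comp (X + 1)) ih
      simp only [Polynomial.sum_comp, mul_comp, C_comp, pow_comp, add_comp, X_comp,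
        Finset.mul_sum] at hcomp
      rw [hp, derivative_sub, derivative_sum, Finset.sum_range_succ, sub_eq_zero]
      simp only [derivative_C_mul, derivative_X_add_C_pow, Nat.sub_self, Nat.cast_zero, C_0,
        pow_zero, derivative_one, mul_zero, add_zero]
      refine Eq.trans (Finset.sum_congr rfl fun k hk => ?_) (hcomp.trans ?_)
      · have hk : k ≤ n := by simpa [Nat.lt_succ_iff] using hk
        have hc : ((n.choose k : ℚ)) * (n + 1) = (n + 1).choose k * ((n + 1 - k : ℕ) : ℚ) := by
          exact_mod_cast Nat.choose_mul_succ_eq n k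
        have hs : n + 1 - k = n - k + 1 := by omega
        rw [← mul_assoc, ← mul_assoc, ← C_mul, ← C_mul,
          show n + 1 - k - 1 = n - k by omega]
        congr 1
        · congr 1
          linear_combination (-((k : ℚ) + 1) ^ (k - 1)) * hc
        · rw [hs]
          simp only [Nat.cast_add, Nat.cast_one, C_add, C_1]
          ring
      · simp only [Nat.add_sub_cancel, Nat.cast_add, Nat.cast_one, C_add, C_1]
        ring
    have heval : p.eval (-((n : ℚ) + 2)) = 0 := by
      have hdiff := congrFun (fwdDiff_iter_pow_eq_zero_of_lt (R := ℚ) (Nat.lt_succ_self n)) 1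
      rw [fwdDiff_iter_eq_sum_shift] at hdiff
      simp only [hp, eval_sub, eval_finsetSum, eval_mul, eval_C, eval_pow, eval_add, eval_X]
      have hz : -((n : ℚ) + 2) + ((n + 1 + 1 : ℕ) : ℚ) = 0 := by push_cast; ring
      rw [hz, zero_pow (Nat.succ_ne_zero n), sub_zero]
      refine Eq.trans (Finset.sum_congr rfl fun k hk => ?_) hdiff
      have hk : k ≤ n + 1 := by simpa [Nat.lt_succ_iff] using hk
      have hneg : -((n : ℚ) + 2) + ((n + 1 - k : ℕ) : ℚ) = (-1) * ((k : ℚ) + 1) := by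
        rw [Nat.cast_sub hk]; push_cast; ring
      have hpow : ((k : ℚ) + 1) ^ (k - 1) * ((k : ℚ) + 1) ^ (n + 1 - k) = (1 + (k : ℚ)) ^ n := by
        rcases Nat.eq_zero_or_pos k with rfl | hk0
        · simp
        · rw [← pow_add, add_comm (k : ℚ)]
          congr 1
          omega
      rw [hneg, mul_pow, zsmul_eq_mul]
      simp only [nsmul_eq_mul, mul_one]
      push_cast
      rw [← hpow]
      ring
    rw [eq_C_of_derivative_eq_zero hderiv] at heval ⊢
    rw [eval_C] at heval
    rw [heval, C_0]

lemma sum_choose_mul_parking (n : ℕ) :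
    ∑ k ∈ Finset.range (n + 1),
      ((n + 1).choose k : ℚ) * (k + 1) ^ (k - 1) * ((n - k : ℕ) : ℚ) ^ (n - k) =
      ((n : ℚ) + 2) ^ n := by
  have h₁ := congrArg (Polynomial.eval (-1)) (abel_binomial_one (n + 1))
  have h₀ := congrArg (fun q => ((n : ℚ) + 1) * Polynomial.eval 0 q) (abel_binomial_one n)
  simp only [Polynomial.eval_finsetSum, Polynomial.eval_mul, Polynomial.eval_C,
    Polynomial.eval_pow, Polynomial.eval_add, Polynomial.eval_X, Finset.mul_sum] at h₀ h₁
  rw [Finset.sum_range_succ] at h₁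
  have hterm : ∑ k ∈ Finset.range (n + 1),
      ((n + 1).choose k : ℚ) * (k + 1) ^ (k - 1) * ((n - k : ℕ) : ℚ) ^ (n - k) =
      ∑ k ∈ Finset.range (n + 1), ((n : ℚ) + 1) *
        ((n.choose k : ℚ) * (k + 1) ^ (k - 1) * (0 + ((n - k : ℕ) : ℚ)) ^ (n - k)) -
      ∑ k ∈ Finset.range (n + 1), ((n + 1).choose k : ℚ) * (k + 1) ^ (k - 1) *
        (-1 + ((n + 1 - k : ℕ) : ℚ)) ^ (n + 1 - k) := by
    rw [← Finset.sum_sub_distrib]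
    refine Finset.sum_congr rfl fun k hk => ?_
    have hk : k ≤ n := by simpa [Nat.lt_succ_iff] using hk
    have hc : ((n.choose k : ℚ)) * (n + 1) = (n + 1).choose k * ((n + 1 - k : ℕ) : ℚ) := by
      exact_mod_cast Nat.choose_mul_succ_eq n k
    rw [show n + 1 - k = n - k + 1 by omega] at hc ⊢
    push_cast at hc ⊢
    rw [show (-1 : ℚ) + (((n - k : ℕ) : ℚ) + 1) = ((n - k : ℕ) : ℚ) by ring, zero_add, pow_succ]
    linear_combination (-((k : ℚ) + 1) ^ (k - 1) * ((n - k : ℕ) : ℚ) ^ (n - k)) * hc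
  rw [hterm, h₀, eq_sub_of_add_eq h₁]
  simp only [Nat.choose_self, Nat.sub_self, Nat.add_sub_cancel]
  push_cast
  ring

/-- Splitting a sum over compositions of `n + 1` according to the first block. -/
lemma Composition.sum_succ_eq_sum_first_block {M : Type*} [AddCommMonoid M] (n : ℕ)
    (F : List ℕ → M) :
    ∑ I : Composition (n + 1), F I.blocks =
      ∑ i ∈ Finset.range (n + 1), ∑ I : Composition (n - i), F ((i + 1) :: I.blocks) := by
  rw [Finset.sum_sigma']
  symm
  refine Finset.sum_bij (fun x hx => ⟨(x.1 + 1) :: x.2.blocks, ?_, ?_⟩) ?_ ?_ ?_ ?_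
  · intro i hi
    rcases List.mem_cons.1 hi with rfl | hi
    · omega
    · exact x.2.blocks_pos hi
  · have : x.1 < n + 1 := by simpa using hx
    rw [List.sum_cons, x.2.blocks_sum]
    omega
  · simp
  · rintro ⟨i, I⟩ _ ⟨j, J⟩ _ h
    have h := congrArg Composition.blocks h
    simp only [List.cons.injEq, add_left_inj] at h
    obtain ⟨rfl, h⟩ := h
    rw [Composition.ext h]
  · rintro ⟨_ | ⟨b, l⟩, hpos, hsum⟩ _
    · simp at hsum
    · have hb : 0 < b := hpos List.mem_cons_self
      rw [List.sum_cons] at hsum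
      refine ⟨⟨b - 1, ⟨l, fun h => hpos (List.mem_cons_of_mem _ h), by omega⟩⟩, ?_, ?_⟩
      · simp
        omega
      · ext1
        simp [Nat.sub_add_cancel hb]
  · intros
    rfl

lemma Composition.sum_zero_eq_nil {M : Type*} [AddCommMonoid M] (F : List ℕ → M) :
    ∑ I : Composition 0, F I.blocks = F [] := by
  have hblocks (I : Composition 0) : I.blocks = [] :=
    List.length_eq_zero_iff.1 (Nat.le_zero.1 I.length_le)
  have hcard : Fintype.card (Composition 0) = 1 := by
    rw [composition_card]
    rfl
  simp [hblocks, hcard]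

lemma sum_composition_prod_neg_parking (n : ℕ) :
    ∑ I : Composition (n + 1),
      (I.blocks.map fun i : ℕ => -(((i : ℚ) + 1) ^ (i - 1) / i.factorial)).prod =
      -((n : ℚ) ^ n / (n + 1).factorial) := by
  induction n using Nat.strong_induction_on with
  | _ n ih =>
    rw [Composition.sum_succ_eq_sum_first_block n
      fun l => (l.map fun i : ℕ => -(((i : ℚ) + 1) ^ (i - 1) / i.factorial)).prod]
    simp only [List.map_cons, List.prod_cons, ← Finset.mul_sum]
    have hconv := sum_choose_mul_parking n
    rw [Finset.sum_range_succ'] at hconv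
    rw [Finset.sum_range_succ]
    rw [Nat.sub_self, Composition.sum_zero_eq_nil
      fun l => (l.map fun i : ℕ => -(((i : ℚ) + 1) ^ (i - 1) / i.factorial)).prod,
      List.map_nil, List.prod_nil]
    have hterm : ∀ i ∈ Finset.range n,
        -((((i + 1 : ℕ) : ℚ) + 1) ^ (i + 1 - 1) / (i + 1).factorial) *
          ∑ I : Composition (n - i),
            (I.blocks.map fun i : ℕ => -(((i : ℚ) + 1) ^ (i - 1) / i.factorial)).prod =
        ((n + 1).choose (i + 1) : ℚ) * (((i + 1 : ℕ) : ℚ) + 1) ^ (i + 1 - 1) *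
          ((n - (i + 1) : ℕ) : ℚ) ^ (n - (i + 1)) / (n + 1).factorial := by
      intro i hi
      have hi : i < n := by simpa using hi
      obtain ⟨m, rfl⟩ : ∃ m, n = i + 1 + m := ⟨n - (i + 1), by omega⟩
      rw [show i + 1 + m - i = m + 1 by omega, ih m (by omega),
        show i + 1 + m - (i + 1) = m by omega, Nat.cast_choose ℚ (by omega),
        show i + 1 + m + 1 - (i + 1) = m + 1 by omega]
      field_simp
    rw [Finset.sum_congr rfl hterm, ← Finset.sum_div, eq_sub_of_add_eq hconv]
    simp only [Nat.choose_zero_right, Nat.sub_zero, Nat.add_sub_cancel]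
    push_cast
    field_simp
    ring

lemma List.prod_map_factorial_dvd_factorial_sum (l : List ℕ) :
    (l.map Nat.factorial).prod ∣ l.sum.factorial := by
  induction l with
  | nil => simp
  | cons a l ih =>
    rw [List.map_cons, List.prod_cons, List.sum_cons]
    exact (mul_dvd_mul_left _ ih).trans (Nat.factorial_mul_factorial_dvd_factorial_add _ _)

lemma List.prod_map_neg_parking (l : List ℕ) :
    (l.map fun i : ℕ => -(((i : ℚ) + 1) ^ (i - 1) / i.factorial)).prod =
      (-1) ^ l.length * ((l.map fun i => (i + 1) ^ (i - 1)).prod : ℕ) /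
        ((l.map Nat.factorial).prod : ℕ) := by
  induction l with
  | nil => simp
  | cons a l ih =>
    simp only [List.map_cons, List.prod_cons, List.length_cons, ih]
    push_cast
    rw [pow_succ, mul_div_assoc, mul_div_assoc, mul_div_mul_comm]
    ring

theorem alternating_sum_over_compositions_eq (n : ℕ) (hn : 1 ≤ n) :
    ((n : ℤ) - 1) ^ (n - 1) =
      ∑ I : Composition n,
        (-1 : ℤ) ^ (I.length - 1) *
          ((Nat.factorial n / (I.blocks.map Nat.factorial).prod : ℕ) : ℤ) *
          (((I.blocks.map fun i => (i + 1) ^ (i - 1)).prod : ℕ) : ℤ) := by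
  obtain ⟨m, rfl⟩ : ∃ m, n = m + 1 := ⟨n - 1, by omega⟩
  rw [← Int.cast_inj (α := ℚ), Int.cast_sum]
  have hterm (I : Composition (m + 1)) :
      (((-1 : ℤ) ^ (I.length - 1) *
          ((Nat.factorial (m + 1) / (I.blocks.map Nat.factorial).prod : ℕ) : ℤ) *
          (((I.blocks.map fun i => (i + 1) ^ (i - 1)).prod : ℕ) : ℤ) : ℤ) : ℚ) =
        -((m + 1).factorial : ℚ) *
          (I.blocks.map fun i : ℕ => -(((i : ℚ) + 1) ^ (i - 1) / i.factorial)).prod := by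
    have hdvd := I.blocks.prod_map_factorial_dvd_factorial_sum
    rw [I.blocks_sum] at hdvd
    have hprod : (((I.blocks.map Nat.factorial).prod : ℕ) : ℚ) ≠ 0 :=
      Nat.cast_ne_zero.2 (ne_zero_of_dvd_ne_zero (m + 1).factorial_ne_zero hdvd)
    have hlen : I.blocks.length = I.length - 1 + 1 := by
      have := I.length_pos_of_pos (Nat.succ_pos m)
      rw [I.blocks_length]
      omega
    rw [List.prod_map_neg_parking, hlen, Int.cast_mul, Int.cast_mul, Int.cast_natCast,
      Int.cast_natCast, Nat.cast_div hdvd hprod, pow_succ]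
    push_cast
    ring
  rw [Finset.sum_congr rfl fun I _ => hterm I, ← Finset.mul_sum,
    sum_composition_prod_neg_parking]
  push_cast
  field_simp
  simp
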